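/- arXiv:0912.5093 — 2 statements merged into one kernel-verified Lean document; each statement's English description precedes it below -/
import Mathlib

section
/- For every ε > 0 and all sufficiently large d, there exists a subset F of Z/dZ with |F| ≥ d^(1-ε) containing no nontrivial three-term arithmetic progressions, such that the set of 'hexagons' {(x,h,k) ∈ (Z/dZ)^3 : x, x+h, x+k, x+k+2h, x+2k+h, x+2k+2h ∈ F} has cardinality at least d^(3-ε). -/
/-!
Behrend's construction: integer points on a sphere contain no three-term progression, and reading
their coordinates as digits carries them to residues modulo `d` without creating one. To place many
hexagons on one sphere, take from the hexagons in a box of `ℕ ^ m` the most popular prescription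
`T s` of the squared norms of the six vertices. Six hexagons following it, the `j`-th one read
starting from its `j`-th vertex, are concatenated into a hexagon of `ℕ ^ (6 * m)`: each of its
vertices has squared norm `∑ s, T s`. The pigeonhole step loses a power of the side length of the
box that does not depend on `m`, hence a factor `d ^ O(1 / m)`.
Finally, a hexagon is determined by three vertices, so `F` has at most `|F| ^ 3` hexagons and the
lower bound for `|F|` follows from the one for the number of hexagons.
-/

open Finset Filter

section Hexagon

variable {A B : Type*}

/-- Six points `v 0, …, v 5`, in cyclic order, form an affine image of a regular hexagon: each
diagonal `v (s + 3) - v s` is twice the side `v (s + 2) - v (s + 1)` parallel to it. Both sides are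
moved so that no subtraction occurs, which allows hexagons of vectors of natural numbers. -/
def IsHexagon [AddCommMonoid A] (v : Fin 6 → A) : Prop :=
  ∀ s, v s + 2 • v (s + 2) = v (s + 3) + 2 • v (s + 1)

instance [AddCommMonoid A] [DecidableEq A] : DecidablePred (IsHexagon (A := A)) :=
  fun v => inferInstanceAs (Decidable (∀ s, v s + 2 • v (s + 2) = v (s + 3) + 2 • v (s + 1)))

/-- The hexagon with vertex `x` and sides `h`, `k` at `x`, its vertices listed in cyclic order. -/
def hexagon [AddCommMonoid A] : A × A × A → Fin 6 → A
  | (x, h, k) => ![x, x + h, x + k + 2 • h, x + 2 • k + 2 • h, x + 2 • k + h, x + k]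

/-- The hexagons whose `s`-th vertex lies in `F s`, as families of vertices. -/
def hexagons [AddCommMonoid A] [DecidableEq A] (F : Fin 6 → Finset A) : Finset (Fin 6 → A) :=
  {v ∈ Fintype.piFinset F | IsHexagon v}

lemma mem_hexagons [AddCommMonoid A] [DecidableEq A] {F : Fin 6 → Finset A} {v : Fin 6 → A} :
    v ∈ hexagons F ↔ (∀ s, v s ∈ F s) ∧ IsHexagon v := by
  rw [hexagons, mem_filter, Fintype.mem_piFinset]

lemma isHexagon_hexagon [AddCommMonoid A] (p : A × A × A) : IsHexagon (hexagon p) := by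
  obtain ⟨x, h, k⟩ := p
  intro s
  fin_cases s <;>
    simp only [hexagon, Fin.zero_eta, Fin.mk_one, Fin.reduceFinMk, Fin.reduceAdd, zero_add,
      Matrix.cons_val, Matrix.cons_val_zero, Matrix.cons_val_one] <;>
    abel

lemma forall_hexagon_mem_iff [Semiring A] {F : Set A} {p : A × A × A} :
    (∀ s, hexagon p s ∈ F) ↔ p.1 ∈ F ∧ p.1 + p.2.1 ∈ F ∧ p.1 + p.2.2 ∈ F ∧
      p.1 + p.2.2 + 2 * p.2.1 ∈ F ∧ p.1 + 2 * p.2.2 + p.2.1 ∈ F ∧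
      p.1 + 2 * p.2.2 + 2 * p.2.1 ∈ F := by
  simp only [hexagon, Fin.forall_fin_succ, Fin.forall_fin_zero, Matrix.cons_val_zero,
    Matrix.cons_val_succ, nsmul_eq_mul, Nat.cast_ofNat]
  tauto

lemma isHexagon_pi {ι : Type*} {A : ι → Type*} [∀ i, AddCommMonoid (A i)]
    {v : Fin 6 → ∀ i, A i} : IsHexagon v ↔ ∀ i, IsHexagon fun s => v s i :=
  ⟨fun hv i s => congrFun (hv s) i, fun hv s => funext fun i => hv i s⟩

namespace IsHexagon

lemma rotate [AddCommMonoid A] {v : Fin 6 → A} (hv : IsHexagon v) (j : Fin 6) :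
    IsHexagon fun s => v (s + j) := by
  intro s
  simpa only [add_right_comm s _ j] using hv (s + j)

lemma map [AddCommMonoid A] [AddCommMonoid B] {v : Fin 6 → A} (hv : IsHexagon v)
    (f : A →+ B) : IsHexagon fun s => f (v s) := by
  intro s
  simpa only [map_add, map_nsmul] using congrArg f (hv s)

lemma ext [AddCancelCommMonoid A] {v w : Fin 6 → A} (hv : IsHexagon v)
    (hw : IsHexagon w) (h₀ : v 0 = w 0) (h₁ : v 1 = w 1) (h₅ : v 5 = w 5) : v = w := by
  have h₂ : v 2 = w 2 := by
    have e : v 5 + 2 • v 1 = v 2 + 2 • v 0 := hv 5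
    have e' : w 5 + 2 • w 1 = w 2 + 2 • w 0 := hw 5
    rw [h₀, h₁, h₅, e'] at e
    exact (add_right_cancel e).symm
  have h₄ : v 4 = w 4 := by
    have e : v 4 + 2 • v 0 = v 1 + 2 • v 5 := hv 4
    have e' : w 4 + 2 • w 0 = w 1 + 2 • w 5 := hw 4
    rw [h₀, h₁, h₅, ← e'] at e
    exact add_right_cancel e
  have h₃ : v 3 = w 3 := by
    have e : v 3 + 2 • v 5 = v 0 + 2 • v 4 := hv 3
    have e' : w 3 + 2 • w 5 = w 0 + 2 • w 4 := hw 3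
    rw [h₀, h₄, h₅, ← e'] at e
    exact add_right_cancel e
  funext s
  fin_cases s <;> assumption

lemma eq_hexagon [AddCommGroup A] {v : Fin 6 → A} (hv : IsHexagon v) :
    v = hexagon (v 0, v 1 - v 0, v 5 - v 0) :=
  hv.ext (isHexagon_hexagon _) rfl (add_sub_cancel _ _).symm (add_sub_cancel _ _).symm

end IsHexagon

lemma hexagon_injective [AddCancelCommMonoid A] :
    Function.Injective (hexagon : A × A × A → Fin 6 → A) := by
  rintro ⟨x, h, k⟩ ⟨x', h', k'⟩ e
  obtain rfl : x = x' := congrFun e 0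
  have hh : x + h = x + h' := congrFun e 1
  have hk : x + k = x + k' := congrFun e 5
  rw [add_left_cancel hh, add_left_cancel hk]

lemma natCard_hexagon_mem [AddCommGroup A] [DecidableEq A] (F : Finset A) :
    Nat.card {p : A × A × A | ∀ s, hexagon p s ∈ (F : Set A)} = #(hexagons fun _ => F) := by
  have himage : hexagon '' {p | ∀ s, hexagon p s ∈ (F : Set A)} = hexagons fun _ => F := by
    ext v
    simp only [Set.mem_image, Set.mem_ofPred_eq, mem_coe, mem_hexagons]
    constructor
    · rintro ⟨p, hp, rfl⟩
      exact ⟨hp, isHexagon_hexagon p⟩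
    · rintro ⟨hvF, hv⟩
      exact ⟨_, hv.eq_hexagon ▸ hvF, hv.eq_hexagon.symm⟩
  rw [Nat.card_coe_set_eq, ← Set.ncard_image_of_injective _ hexagon_injective, himage,
    Set.ncard_coe_finset]

lemma card_hexagons_le_cube [AddCancelCommMonoid A] [DecidableEq A] (F : Finset A) :
    #(hexagons fun _ => F) ≤ #F ^ 3 := by
  calc #(hexagons fun _ => F) ≤ #(F ×ˢ F ×ˢ F) := by
        refine card_le_card_of_injOn (fun v => (v 0, v 1, v 5)) (fun v hv => ?_)
          fun v hv w hw e => ?_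
        · have hvF := (mem_hexagons.1 hv).1
          simp [hvF]
        · simp only [Prod.mk.injEq] at e
          exact (mem_hexagons.1 hv).2.ext (mem_hexagons.1 hw).2 e.1 e.2.1 e.2.2
    _ = #F ^ 3 := by simp only [card_product]; ring

lemma card_hexagons_le_card_hexagons_image [AddCommMonoid A] [AddCommMonoid B]
    [DecidableEq A] [DecidableEq B] (f : A →+ B) {F : Fin 6 → Finset A}
    (hf : ∀ s, Set.InjOn f (F s)) : #(hexagons F) ≤ #(hexagons fun s => (F s).image f) := by
  refine card_le_card_of_injOn (fun v s => f (v s)) (fun v hv => ?_) fun v hv w hw e => ?_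
  · obtain ⟨hvF, hv⟩ := mem_hexagons.1 hv
    exact mem_hexagons.2 ⟨fun s => mem_image_of_mem f (hvF s), hv.map f⟩
  · exact funext fun s =>
      hf s ((mem_hexagons.1 hv).1 s) ((mem_hexagons.1 hw).1 s) (congrFun e s)

end Hexagon

section Sphere

lemma pow_le_card_hexagons_box (m M : ℕ) :
    M ^ (3 * m) ≤ #(hexagons fun _ => Behrend.box m (5 * M)) := by
  set B := Behrend.box m M with hB
  calc M ^ (3 * m) = #(B ×ˢ B ×ˢ B) := by simp only [hB, card_product, Behrend.card_box]; ring
    _ ≤ #(hexagons fun _ => Behrend.box m (5 * M)) := by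
        refine card_le_card_of_injOn hexagon ?_ hexagon_injective.injOn
        intro p hp
        simp only [hB, coe_product, Set.mem_prod, mem_coe, Behrend.mem_box] at hp
        refine mem_hexagons.2 ⟨forall_hexagon_mem_iff.2 ?_, isHexagon_hexagon p⟩
        simp only [mem_coe, Behrend.mem_box, Pi.add_apply, Pi.mul_apply, Pi.ofNat_apply,
          ← forall_and]
        intro i
        have := hp.1 i
        have := hp.2.1 i
        have := hp.2.2 i
        lia

lemma exists_card_hexagons_box_le_mul_card_hexagons_sphere (m N : ℕ) :
    ∃ T : Fin 6 → ℕ, #(hexagons fun _ => Behrend.box m N) ≤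
      #(hexagons fun s => Behrend.sphere m N (T s)) * (m * (N - 1) ^ 2 + 1) ^ 6 := by
  let sqNorms (v : Fin 6 → Fin m → ℕ) (s : Fin 6) : ℕ := ∑ i, v s i ^ 2
  let R := Fintype.piFinset fun _ : Fin 6 => range (m * (N - 1) ^ 2 + 1)
  have hmaps : ∀ v ∈ hexagons fun _ => Behrend.box m N, sqNorms v ∈ R := fun v hv =>
    Fintype.mem_piFinset.2 fun s => mem_range_succ_iff.2 <|
      Behrend.sum_sq_le_of_mem_box ((mem_hexagons.1 hv).1 s)
  have hfiber (T : Fin 6 → ℕ) : {v ∈ hexagons fun _ => Behrend.box m N | sqNorms v = T} =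
      hexagons fun s => Behrend.sphere m N (T s) := by
    ext v
    simp only [mem_filter, mem_hexagons, Behrend.sphere, sqNorms, funext_iff, forall_and]
    tauto
  have hR : R.Nonempty := ⟨0, by simp [R]⟩
  obtain ⟨T, -, hT⟩ :=
    exists_max_image R (fun T => #(hexagons fun s => Behrend.sphere m N (T s))) hR
  have hle := card_le_mul_card_image_of_maps_to hmaps
    #(hexagons fun s => Behrend.sphere m N (T s))
    fun T' hT' => (congrArg card (hfiber T')).trans_le (hT T' hT')
  have hcard : #R = (m * (N - 1) ^ 2 + 1) ^ 6 := by
    rw [Fintype.card_piFinset_const, card_range]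
  exact ⟨T, hcard ▸ hle⟩

/-- The concatenation of six families of six vectors, the `j`-th family being read from its `j`-th
vector on, so that each vector of each family occurs exactly once. -/
def twist {A : Type*} {m : ℕ} (V : Fin 6 → Fin 6 → Fin m → A) : Fin 6 → Fin (6 * m) → A :=
  fun s i => V i.divNat (s + i.divNat) i.modNat

lemma twist_injective {A : Type*} {m : ℕ} :
    Function.Injective (twist : (Fin 6 → Fin 6 → Fin m → A) → Fin 6 → Fin (6 * m) → A) := by
  intro V W h
  funext j s i
  have hsymm : ((finProdFinEquiv (j, i)).divNat, (finProdFinEquiv (j, i)).modNat) = (j, i) :=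
    finProdFinEquiv.symm_apply_apply (j, i)
  simp only [Prod.mk.injEq] at hsymm
  simpa only [twist, hsymm, sub_add_cancel] using congrFun₂ h (s - j) (finProdFinEquiv (j, i))

lemma isHexagon_twist {A : Type*} [AddCommMonoid A] {m : ℕ} {V : Fin 6 → Fin 6 → Fin m → A}
    (hV : ∀ j, IsHexagon (V j)) : IsHexagon (twist V) :=
  isHexagon_pi.2 fun i => isHexagon_pi.1 ((hV i.divNat).rotate i.divNat) i.modNat

lemma twist_mem_sphere {m N : ℕ} {T : Fin 6 → ℕ} {V : Fin 6 → Fin 6 → Fin m → ℕ}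
    (hV : ∀ j s, V j s ∈ Behrend.sphere m N (T s)) (s : Fin 6) :
    twist V s ∈ Behrend.sphere (6 * m) N (∑ r, T r) := by
  refine mem_filter.2 ⟨Behrend.mem_box.2 fun i =>
    Behrend.mem_box.1 (Behrend.sphere_subset_box (hV i.divNat _)) i.modNat, ?_⟩
  calc ∑ i, twist V s i ^ 2 = ∑ p : Fin 6 × Fin m, V p.1 (s + p.1) p.2 ^ 2 :=
        finProdFinEquiv.symm.sum_comp fun p : Fin 6 × Fin m => V p.1 (s + p.1) p.2 ^ 2
    _ = ∑ j, ∑ i, V j (s + j) i ^ 2 := Fintype.sum_prod_type _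
    _ = ∑ j, T (s + j) := sum_congr rfl fun j _ => (mem_filter.1 (hV j (s + j))).2
    _ = ∑ r, T r := Equiv.sum_comp (Equiv.addLeft s) T

lemma card_hexagons_sphere_pow_six_le (m N : ℕ) (T : Fin 6 → ℕ) :
    #(hexagons fun s => Behrend.sphere m N (T s)) ^ 6 ≤
      #(hexagons fun _ => Behrend.sphere (6 * m) N (∑ s, T s)) := by
  rw [← Fintype.card_piFinset_const]
  refine card_le_card_of_injOn twist (fun V hV => ?_) twist_injective.injOn
  have hV' (j : Fin 6) := mem_hexagons.1 (Fintype.mem_piFinset.1 hV j)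
  exact mem_hexagons.2
    ⟨twist_mem_sphere fun j => (hV' j).1, isHexagon_twist fun j => (hV' j).2⟩

lemma exists_pow_le_card_hexagons_sphere (m M : ℕ) :
    ∃ k, M ^ (18 * m) ≤ #(hexagons fun _ => Behrend.sphere (6 * m) (5 * M) k) *
      (m * (5 * M - 1) ^ 2 + 1) ^ 36 := by
  obtain ⟨T, hT⟩ := exists_card_hexagons_box_le_mul_card_hexagons_sphere m (5 * M)
  refine ⟨∑ s, T s, ?_⟩
  set K := m * (5 * M - 1) ^ 2 + 1
  calc M ^ (18 * m) = (M ^ (3 * m)) ^ 6 := by ring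
    _ ≤ (#(hexagons fun s => Behrend.sphere m (5 * M) (T s)) * K ^ 6) ^ 6 := by
        gcongr
        exact (pow_le_card_hexagons_box m M).trans hT
    _ = #(hexagons fun s => Behrend.sphere m (5 * M) (T s)) ^ 6 * K ^ 36 := by ring
    _ ≤ _ := by
        gcongr
        exact card_hexagons_sphere_pow_six_le m (5 * M) T

end Sphere

section Residues

lemma behrendMap_lt_pow {n q : ℕ} {x : Fin n → ℕ} (hx : ∀ i, x i < q) :
    Behrend.map q x < q ^ n :=
  (finFunctionFinEquiv fun i => (⟨x i, hx i⟩ : Fin q)).isLt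

/-- The residue modulo `d` with base `q` digits `x 0, …, x (n - 1)`, least significant first. -/
def digitHom (n q d : ℕ) : (Fin n → ℕ) →+ ZMod d :=
  (Nat.castAddMonoidHom (ZMod d)).comp (Behrend.map q)

lemma digitHom_injOn {n q d : ℕ} (hd : q ^ n ≤ d) :
    Set.InjOn (digitHom n q d) {x | ∀ i, x i < q} := by
  intro x hx y hy h
  have hmod : Behrend.map q x ≡ Behrend.map q y [MOD d] := (ZMod.natCast_eq_natCast_iff _ _ _).1 h
  exact Behrend.map_injOn hx hy <| hmod.eq_of_lt_of_lt
    ((behrendMap_lt_pow hx).trans_le hd) ((behrendMap_lt_pow hy).trans_le hd)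

lemma threeAPFree_image_digitHom_sphere {n N k d : ℕ} (hd : (2 * N - 1) ^ n ≤ d) :
    ThreeAPFree (digitHom n (2 * N - 1) d '' Behrend.sphere n N k) := by
  refine Behrend.threeAPFree_sphere.image' _ ((digitHom_injOn hd).mono ?_)
  rintro _ ⟨x, hx, y, hy, rfl⟩ i
  have := Behrend.mem_box.1 (Behrend.sphere_subset_box hx) i
  have := Behrend.mem_box.1 (Behrend.sphere_subset_box hy) i
  simp only [Pi.add_apply]
  lia

lemma digitHom_injOn_sphere {n N k d : ℕ} (hd : (2 * N - 1) ^ n ≤ d) :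
    Set.InjOn (digitHom n (2 * N - 1) d) (Behrend.sphere n N k) := by
  refine (digitHom_injOn hd).mono ?_
  intro x hx i
  have := Behrend.mem_box.1 (Behrend.sphere_subset_box hx) i
  lia

lemma exists_threeAPFree_pow_le_card_hexagons {m M d : ℕ} (hd : (10 * M) ^ (6 * m) ≤ d) :
    ∃ F : Finset (ZMod d), ThreeAPFree (F : Set (ZMod d)) ∧
      M ^ (18 * m) ≤ #(hexagons fun _ => F) * (m * (5 * M - 1) ^ 2 + 1) ^ 36 := by
  have hd' : (2 * (5 * M) - 1) ^ (6 * m) ≤ d :=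
    (Nat.pow_le_pow_left (by lia) _).trans hd
  obtain ⟨k, hk⟩ := exists_pow_le_card_hexagons_sphere m M
  refine ⟨(Behrend.sphere (6 * m) (5 * M) k).image (digitHom (6 * m) (2 * (5 * M) - 1) d), ?_, ?_⟩
  · rw [coe_image]
    exact threeAPFree_image_digitHom_sphere hd'
  · refine hk.trans (Nat.mul_le_mul_right _ ?_)
    exact card_hexagons_le_card_hexagons_image _ fun _ => digitHom_injOn_sphere hd'

lemma eq_zero_of_threeAPFree {R : Type*} [Ring R] {F : Set R} (hF : ThreeAPFree F)
    {n r : R} (h₀ : n ∈ F) (h₁ : n + r ∈ F) (h₂ : n + 2 * r ∈ F) : r = 0 :=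
  left_eq_add.1 (hF h₀ h₁ h₂ (by rw [two_mul]; abel))

end Residues

section Asymptotics

lemma exists_mul_pow_le_and_le_two_mul_pow {n b d : ℕ} (hn : n ≠ 0) (hb : b ≠ 0)
    (hd : b ^ n ≤ d) : ∃ M ≠ 0, (b * M) ^ n ≤ d ∧ d ≤ (2 * b * M) ^ n := by
  have hbr : b ≤ Nat.nthRoot n d := (Nat.le_nthRoot_iff hn).2 hd
  have hM : Nat.nthRoot n d / b ≠ 0 := (Nat.div_pos hbr (Nat.pos_of_ne_zero hb)).ne'
  refine ⟨Nat.nthRoot n d / b, hM, ?_, ?_⟩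
  · exact (Nat.le_nthRoot_iff hn).1 (Nat.mul_div_le _ _)
  · refine (Nat.lt_pow_nthRoot_add_one hn d).le.trans (Nat.pow_le_pow_left ?_ n)
    calc Nat.nthRoot n d + 1 ≤ b * (Nat.nthRoot n d / b + 1) :=
          Nat.lt_mul_div_succ _ (Nat.pos_of_ne_zero hb)
      _ ≤ b * (Nat.nthRoot n d / b + Nat.nthRoot n d / b) := by gcongr; lia
      _ = 2 * b * (Nat.nthRoot n d / b) := by ring

lemma pow_le_rpow_div_of_pow_le {x y : ℝ} {a : ℕ} (hx : 0 ≤ x) (ha : a ≠ 0) (h : x ^ a ≤ y)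
    (b : ℕ) : x ^ b ≤ y ^ ((b : ℝ) / a) := by
  calc x ^ b = (x ^ a) ^ ((b : ℝ) / a) := by
        rw [← Real.rpow_natCast_mul hx, mul_div_cancel₀ _ (Nat.cast_ne_zero.2 ha),
          Real.rpow_natCast]
    _ ≤ y ^ ((b : ℝ) / a) := by gcongr

lemma cube_le_of_pow_le {m M d H : ℕ} (hm : m ≠ 0) (hM : M ≠ 0) (hd : d ≤ (20 * M) ^ (6 * m))
    (hH : M ^ (18 * m) ≤ H * (m * (5 * M - 1) ^ 2 + 1) ^ 36) :
    d ^ 3 ≤ 20 ^ (18 * m) * (25 * m) ^ 36 * M ^ 72 * H := by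
  have hK : m * (5 * M - 1) ^ 2 + 1 ≤ 25 * m * M ^ 2 := by
    calc m * (5 * M - 1) ^ 2 + 1 ≤ m * ((5 * M - 1) ^ 2 + 1) := by
          rw [mul_add_one]
          gcongr
          lia
      _ ≤ m * (5 * M) ^ 2 := by
          gcongr
          exact Nat.pow_lt_pow_left (by lia) two_ne_zero
      _ = 25 * m * M ^ 2 := by ring
  calc d ^ 3 ≤ ((20 * M) ^ (6 * m)) ^ 3 := by gcongr
    _ = 20 ^ (18 * m) * M ^ (18 * m) := by rw [← pow_mul, mul_pow]; ring_nf
    _ ≤ 20 ^ (18 * m) * (H * (25 * m * M ^ 2) ^ 36) := by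
        gcongr
        exact hH.trans (by gcongr)
    _ = 20 ^ (18 * m) * (25 * m) ^ 36 * M ^ 72 * H := by
        rw [mul_pow (25 * m), ← pow_mul]
        ac_rfl

theorem exists_const_cube_le_card_hexagons {m : ℕ} (hm : m ≠ 0) :
    ∃ C : ℝ, ∀ d : ℕ, 10 ^ (6 * m) ≤ d → ∃ F : Finset (ZMod d),
      ThreeAPFree (F : Set (ZMod d)) ∧
      (d : ℝ) ^ 3 ≤ C * (d : ℝ) ^ (12 / m : ℝ) * #(hexagons fun _ => F) := by
  refine ⟨20 ^ (18 * m) * (25 * m) ^ 36, fun d hd => ?_⟩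
  have h6m : 6 * m ≠ 0 := by lia
  obtain ⟨M, hM, hMd, hdM⟩ := exists_mul_pow_le_and_le_two_mul_pow h6m (by simp) hd
  obtain ⟨F, hF, hH⟩ := exists_threeAPFree_pow_le_card_hexagons hMd
  refine ⟨F, hF, ?_⟩
  have hM72 : (M : ℝ) ^ 72 ≤ (d : ℝ) ^ (12 / m : ℝ) := by
    have hMd' : (M : ℝ) ^ (6 * m) ≤ d := by
      exact_mod_cast (Nat.pow_le_pow_left (by lia) _).trans hMd
    convert pow_le_rpow_div_of_pow_le (Nat.cast_nonneg M) h6m hMd' 72 using 2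
    push_cast
    field_simp
    norm_num
  calc (d : ℝ) ^ 3 ≤ 20 ^ (18 * m) * (25 * m) ^ 36 * (M : ℝ) ^ 72 * #(hexagons fun _ => F) := by
        exact_mod_cast cube_le_of_pow_le hm hM hdM hH
    _ ≤ _ := mul_le_mul_of_nonneg_right (mul_le_mul_of_nonneg_left hM72 (by positivity))
        (Nat.cast_nonneg _)

theorem eventually_exists_threeAPFree_rpow_le_card_hexagons {ε : ℝ} (hε : 0 < ε) :
    ∀ᶠ d : ℕ in atTop, ∃ F : Finset (ZMod d), ThreeAPFree (F : Set (ZMod d)) ∧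
      (d : ℝ) ^ (3 - ε) ≤ #(hexagons fun _ => F) := by
  obtain ⟨m, hm⟩ := exists_nat_gt (24 / ε)
  have hm₀ : (0 : ℝ) < m := (by positivity : (0 : ℝ) < 24 / ε).trans hm
  have hmε : 12 / (m : ℝ) ≤ ε / 2 := by
    rw [div_lt_iff₀ hε] at hm
    rw [div_le_iff₀ hm₀]
    linarith
  obtain ⟨C, hC⟩ := exists_const_cube_le_card_hexagons (Nat.cast_pos.1 hm₀).ne'
  have hCd : ∀ᶠ d : ℕ in atTop, C ≤ (d : ℝ) ^ (ε / 2) :=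
    ((tendsto_rpow_atTop (half_pos hε)).comp tendsto_natCast_atTop_atTop).eventually_ge_atTop C
  filter_upwards [hCd, eventually_ge_atTop (10 ^ (6 * m)), eventually_ge_atTop 1]
    with d hCd hd hd₁
  obtain ⟨F, hF, hH⟩ := hC d hd
  refine ⟨F, hF, ?_⟩
  have hd₁' : (1 : ℝ) ≤ d := Nat.one_le_cast.2 hd₁
  have hd₀ : (0 : ℝ) < d := by linarith
  rw [Real.rpow_sub hd₀, div_le_iff₀' (by positivity)]
  calc (d : ℝ) ^ (3 : ℝ) = (d : ℝ) ^ 3 := Real.rpow_ofNat _ 3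
    _ ≤ C * (d : ℝ) ^ (12 / m : ℝ) * #(hexagons fun _ => F) := hH
    _ ≤ (d : ℝ) ^ (ε / 2) * (d : ℝ) ^ (ε / 2) * #(hexagons fun _ => F) := by gcongr
    _ = (d : ℝ) ^ ε * #(hexagons fun _ => F) := by rw [← Real.rpow_add hd₀, add_halves]

lemma rpow_one_sub_le_of_rpow_three_sub_le_cube {x y ε : ℝ} (hx : 1 ≤ x) (hy : 0 ≤ y)
    (hε : 0 ≤ ε) (h : x ^ (3 - ε) ≤ y ^ 3) : x ^ (1 - ε) ≤ y := by
  refine le_of_pow_le_pow_left₀ three_ne_zero hy ?_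
  calc (x ^ (1 - ε)) ^ 3 = x ^ ((1 - ε) * 3) := (Real.rpow_mul_natCast (by linarith) _ 3).symm
    _ ≤ x ^ (3 - ε) := Real.rpow_le_rpow_of_exponent_le hx (by linarith)
    _ ≤ y ^ 3 := h

end Asymptotics

/-- Behrend-type construction with many hexagons: for every `ε > 0` and all sufficiently
large `d`, there is a subset `F` of `ℤ/dℤ` with `|F| ≥ d^(1-ε)`, containing no nontrivial
three-term arithmetic progressions, such that the set of hexagons
`{(x,h,k) : x, x+h, x+k, x+k+2h, x+2k+h, x+2k+2h ∈ F}` has cardinality at least `d^(3-ε)`. -/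
theorem statement1 (ε : ℝ) (hε : 0 < ε) :
    ∃ d₀ : ℕ, ∀ d : ℕ, d₀ ≤ d → ∃ F : Set (ZMod d),
      (d : ℝ) ^ ((1 : ℝ) - ε) ≤ (Nat.card F : ℝ) ∧
      (∀ n r : ZMod d, n ∈ F → n + r ∈ F → n + 2 * r ∈ F → r = 0) ∧
      (d : ℝ) ^ ((3 : ℝ) - ε) ≤
        (Nat.card {p : ZMod d × ZMod d × ZMod d |
          p.1 ∈ F ∧ p.1 + p.2.1 ∈ F ∧ p.1 + p.2.2 ∈ F ∧
          p.1 + p.2.2 + 2 * p.2.1 ∈ F ∧ p.1 + 2 * p.2.2 + p.2.1 ∈ F ∧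
          p.1 + 2 * p.2.2 + 2 * p.2.1 ∈ F} : ℝ) := by
  obtain ⟨d₀, hd₀⟩ := eventually_atTop.1
    ((eventually_exists_threeAPFree_rpow_le_card_hexagons hε).and (eventually_ge_atTop 1))
  refine ⟨d₀, fun d hd => ?_⟩
  obtain ⟨⟨F, hF, hH⟩, hd₁⟩ := hd₀ d hd
  refine ⟨F, ?_, fun n r => eq_zero_of_threeAPFree hF, ?_⟩
  · have hcube : (#(hexagons fun _ => F) : ℝ) ≤ (#F : ℝ) ^ 3 := by
      exact_mod_cast card_hexagons_le_cube F
    rw [Nat.card_eq_card_toFinset, toFinset_coe]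
    exact rpow_one_sub_le_of_rpow_three_sub_le_cube (Nat.one_le_cast.2 hd₁) (Nat.cast_nonneg _)
      hε.le (hH.trans hcube)
  · simpa only [← forall_hexagon_mem_iff, natCard_hexagon_mem] using hH
end

section
/- There exists a positive semi-definite Hermitian d × d complex matrix A (indexed by Z/dZ, extended periodically) such that the sum over all n, r ∈ Z/dZ of A(n, n+r)·A(n+r, n+2r)·A(n+2r, n) is a negative real number. -/
open ComplexOrder

/-!
The matrix is a Gram matrix of vectors in the plane, so each progression `n, n + r, n + 2r`
contributes the product of the three inner products of its vectors. Take a set `P` disjoint from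
`-P` such that `0` and the points of `P ∪ -P` contain no nontrivial three-term progression except
`-a, 0, a` for `±a ∈ P`. Put the vector `(8, 0)` at `0`, `(1, 2)` on `P`, `(1, -2)` on `-P`, and
zero elsewhere. The trivial progressions contribute `(8 ^ 2) ^ 3 + 5 ^ 3 * #(P ∪ -P)`, while the
vectors of `-a, 0, a` have inner products `8`, `8` and `1 - 4 = -3`, for a contribution of
`-192 * #(P ∪ -P)`. The total `8 ^ 6 - 67 * #(P ∪ -P)` is negative once `P` is large.

Arbitrarily large sets `P` occur in cyclic groups: in a product of `ZMod (p i)` with pairwise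
coprime `p i ≥ 5`, cyclic by the Chinese remainder theorem, take the standard idempotents.
-/

open Finset Matrix
open scoped Pointwise

section APMoment

variable {G R : Type*} [AddCommGroup G] [Fintype G] [NonUnitalNonAssocSemiring R]

/-- The third moment of a matrix restricted to three-term arithmetic progressions of indices. -/
def apMoment (A : Matrix G G R) : R :=
  ∑ n, ∑ r, A n (n + r) * A (n + r) (n + 2 • r) * A (n + 2 • r) n

theorem apMoment_eq_sum_centered (A : Matrix G G R) :
    apMoment A = ∑ m, ∑ r, A (m - r) m * A m (m + r) * A (m + r) (m - r) := by
  rw [apMoment, sum_comm]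
  conv_rhs => rw [sum_comm]
  refine sum_congr rfl fun r _ ↦ Fintype.sum_equiv (Equiv.addRight r) _ _ fun n ↦ ?_
  simp only [Equiv.coe_addRight, add_sub_cancel_right, two_nsmul, add_assoc]

end APMoment

section APStar

variable {G : Type*} [AddCommGroup G] [DecidableEq G] {P : Finset G} {m n : G}

/-- `P` is one half of a symmetric disjoint union `P ∪ -P` that, together with `0`, contains no
nontrivial three-term progression other than those centered at `0`. Progressions are written
`m - r, m, m + r` by their midpoint. -/
structure IsAPStar (P : Finset G) : Prop where
  neg_notMem : ∀ a ∈ P, -a ∉ P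
  eq_zero_of_mem : ∀ m ∈ P ∪ -P, ∀ r, m - r ∈ insert 0 (P ∪ -P) → m + r ∈ insert 0 (P ∪ -P) → r = 0

theorem neg_mem_union_neg (hn : n ∈ P ∪ -P) : -n ∈ P ∪ -P := by
  simpa [or_comm] using hn

namespace IsAPStar

theorem zero_notMem (hP : IsAPStar P) : (0 : G) ∉ P :=
  fun h ↦ hP.neg_notMem 0 h (by simpa using h)

theorem zero_notMem_union_neg (hP : IsAPStar P) : (0 : G) ∉ P ∪ -P := by
  simpa using hP.zero_notMem

theorem card_union_neg (hP : IsAPStar P) : #(P ∪ -P) = 2 * #P := by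
  have hdisj : Disjoint P (-P) :=
    disjoint_left.2 fun a ha hna ↦ hP.neg_notMem a ha (mem_neg'.1 hna)
  rw [card_union_of_disjoint hdisj, card_neg, two_mul]

theorem map {H : Type*} [AddCommGroup H] [DecidableEq H] (e : G ≃+ H) (hP : IsAPStar P) :
    IsAPStar (P.map e.toEquiv.toEmbedding) where
  neg_notMem a ha hna :=
    hP.neg_notMem (e.symm a) (mem_map_equiv.1 ha) (by simpa using mem_map_equiv.1 hna)
  eq_zero_of_mem m hm r hsub hadd := by
    simp only [mem_insert, mem_union, mem_neg', mem_map_equiv] at hm hsub hadd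
    have hr := hP.eq_zero_of_mem (e.symm m) (by simpa using hm) (e.symm r)
      (by simpa [← map_neg, ← map_sub] using hsub) (by simpa [← map_neg, ← map_add] using hadd)
    simpa using hr

end IsAPStar

section Weights

variable (R : Type*) [Ring R]

/-- First coordinates of the vectors whose Gram matrix is `starMatrix`: even under negation. -/
def evenWeight (P : Finset G) (n : G) : R :=
  if n = 0 then 8 else if n ∈ P ∪ -P then 1 else 0

/-- Second coordinates of the vectors whose Gram matrix is `starMatrix`: odd under negation as soon
as `P` and `-P` are disjoint. -/
def oddWeight (P : Finset G) (n : G) : R :=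
  if n ∈ P then 2 else if -n ∈ P then -2 else 0

theorem evenWeight_zero : evenWeight R P 0 = 8 := if_pos rfl

theorem evenWeight_of_mem (hP : IsAPStar P) (hn : n ∈ P ∪ -P) : evenWeight R P n = 1 := by
  rw [evenWeight, if_neg (ne_of_mem_of_not_mem hn hP.zero_notMem_union_neg), if_pos hn]

theorem evenWeight_of_notMem (hn : n ∉ insert 0 (P ∪ -P)) : evenWeight R P n = 0 := by
  rw [mem_insert, not_or] at hn
  rw [evenWeight, if_neg hn.1, if_neg hn.2]

theorem oddWeight_neg (hP : IsAPStar P) (n : G) : oddWeight R P (-n) = -oddWeight R P n := by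
  have := hP.neg_notMem n
  by_cases hn : n ∈ P <;> by_cases hn' : -n ∈ P <;> simp_all [oddWeight]

theorem oddWeight_zero (hP : IsAPStar P) : oddWeight R P 0 = 0 := by
  simp [oddWeight, hP.zero_notMem]

theorem oddWeight_mul_self (hn : n ∈ P ∪ -P) : oddWeight R P n * oddWeight R P n = 4 := by
  rw [mem_union, mem_neg'] at hn
  by_cases hnP : n ∈ P
  · norm_num [oddWeight, hnP]
  · norm_num [oddWeight, hnP, hn.resolve_left hnP]

theorem oddWeight_of_notMem (hn : n ∉ insert 0 (P ∪ -P)) : oddWeight R P n = 0 := by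
  rw [mem_insert, mem_union, mem_neg', not_or, not_or] at hn
  rw [oddWeight, if_neg hn.2.1, if_neg hn.2.2]

end Weights

section StarMatrix

variable (R : Type*) [CommRing R] [StarRing R]

/-- The Gram matrix of the vectors `(8, 0)` at `0`, `(1, 2)` on `P`, `(1, -2)` on `-P`, and `0`
elsewhere. -/
def starMatrix (P : Finset G) : Matrix G G R :=
  vecMulVec (evenWeight R P) (star (evenWeight R P)) +
    vecMulVec (oddWeight R P) (star (oddWeight R P))

theorem starMatrix_posSemidef [Finite G] [PartialOrder R] [StarOrderedRing R] (P : Finset G) :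
    (starMatrix R P).PosSemidef :=
  (posSemidef_vecMulVec_self_star _).add (posSemidef_vecMulVec_self_star _)

theorem starMatrix_apply (P : Finset G) (m n : G) :
    starMatrix R P m n =
      evenWeight R P m * evenWeight R P n + oddWeight R P m * oddWeight R P n := by
  have hstar_even : star (evenWeight R P n) = evenWeight R P n := by
    simp [evenWeight, apply_ite (star : R → R)]
  have hstar_odd : star (oddWeight R P n) = oddWeight R P n := by
    simp [oddWeight, apply_ite (star : R → R)]
  simp [starMatrix, vecMulVec_apply, hstar_even, hstar_odd]

theorem starMatrix_comm (P : Finset G) (m n : G) : starMatrix R P m n = starMatrix R P n m := by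
  simp only [starMatrix_apply, mul_comm]

theorem starMatrix_apply_of_notMem (hn : n ∉ insert 0 (P ∪ -P)) : starMatrix R P m n = 0 := by
  simp [starMatrix_apply, evenWeight_of_notMem R hn, oddWeight_of_notMem R hn]

theorem starMatrix_zero_zero (hP : IsAPStar P) : starMatrix R P 0 0 = 8 ^ 2 := by
  simp [starMatrix_apply, evenWeight_zero, oddWeight_zero R hP, sq]

theorem starMatrix_zero_apply (hP : IsAPStar P) (hn : n ∈ P ∪ -P) : starMatrix R P 0 n = 8 := by
  simp [starMatrix_apply, evenWeight_zero, oddWeight_zero R hP, evenWeight_of_mem R hP hn]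

theorem starMatrix_self (hP : IsAPStar P) (hn : n ∈ P ∪ -P) : starMatrix R P n n = 5 := by
  norm_num [starMatrix_apply, evenWeight_of_mem R hP hn, oddWeight_mul_self R hn]

theorem starMatrix_apply_neg (hP : IsAPStar P) (hn : n ∈ P ∪ -P) :
    starMatrix R P n (-n) = -3 := by
  norm_num [starMatrix_apply, evenWeight_of_mem R hP hn, oddWeight_mul_self R hn,
    evenWeight_of_mem R hP (neg_mem_union_neg hn), oddWeight_neg R hP]

variable [Fintype G]

theorem sum_starMatrix_centered_zero (hP : IsAPStar P) :
    ∑ r, starMatrix R P (0 - r) 0 * starMatrix R P 0 (0 + r) * starMatrix R P (0 + r) (0 - r) =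
      8 ^ 6 - 192 * #(P ∪ -P) := by
  simp only [zero_sub, zero_add]
  rw [← sum_subset (subset_univ (insert 0 (P ∪ -P))) fun r _ hr ↦ by
    simp [starMatrix_apply_of_notMem R hr], sum_insert hP.zero_notMem_union_neg]
  have hterm : ∀ r ∈ P ∪ -P,
      starMatrix R P (-r) 0 * starMatrix R P 0 r * starMatrix R P r (-r) = -192 := fun r hr ↦ by
    rw [starMatrix_comm R P (-r) 0, starMatrix_zero_apply R hP (neg_mem_union_neg hr),
      starMatrix_zero_apply R hP hr, starMatrix_apply_neg R hP hr]
    norm_num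
  rw [sum_congr rfl hterm, sum_const, nsmul_eq_mul, neg_zero, starMatrix_zero_zero R hP]
  ring

theorem sum_starMatrix_centered_of_mem (hP : IsAPStar P) (hm : m ∈ P ∪ -P) :
    ∑ r, starMatrix R P (m - r) m * starMatrix R P m (m + r) * starMatrix R P (m + r) (m - r) =
      5 ^ 3 := by
  rw [Fintype.sum_eq_single 0 fun r hr ↦ ?_]
  · rw [sub_zero, add_zero, starMatrix_self R hP hm]
    ring
  · by_cases hsub : m - r ∈ insert 0 (P ∪ -P)
    · have hadd : m + r ∉ insert 0 (P ∪ -P) := fun hadd ↦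
        hr (hP.eq_zero_of_mem m hm r hsub hadd)
      simp [starMatrix_apply_of_notMem R hadd]
    · simp [starMatrix_apply_of_notMem R hsub]

theorem apMoment_starMatrix (hP : IsAPStar P) :
    apMoment (starMatrix R P) = 8 ^ 6 - 134 * #P := by
  rw [apMoment_eq_sum_centered,
    ← sum_subset (subset_univ (insert 0 (P ∪ -P))) fun m _ hm ↦ by
      simp [starMatrix_apply_of_notMem R hm],
    sum_insert hP.zero_notMem_union_neg, sum_starMatrix_centered_zero R hP,
    sum_congr rfl fun m hm ↦ sum_starMatrix_centered_of_mem R hP hm, sum_const, nsmul_eq_mul,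
    hP.card_union_neg]
  push_cast
  ring

end StarMatrix

end APStar

section AxisVectors

variable {ι : Type*} [Fintype ι] [DecidableEq ι] {K : ι → Type*} [∀ i, AddCommGroup (K i)]
  [∀ i, DecidableEq (K i)] {g : ∀ i, K i}

/-- The coordinates of `g` placed one at a time on the axes of a product of groups; the standard
basis when `g = 1`. -/
def axisVectors (g : ∀ i, K i) : Finset (∀ i, K i) :=
  univ.image fun i ↦ Pi.single i (g i)

theorem mem_axisVectors_union_neg {x : ∀ i, K i} :
    x ∈ axisVectors g ∪ -axisVectors g ↔ ∃ i, x = Pi.single i (g i) ∨ x = -Pi.single i (g i) := by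
  simp [axisVectors, exists_or, eq_comm (b := x), eq_comm (b := -x), neg_eq_iff_eq_neg]

theorem card_axisVectors (hg : ∀ i, g i ≠ 0) : #(axisVectors g) = Fintype.card ι := by
  refine card_image_of_injective _ fun i j hij ↦ ?_
  by_contra hne
  exact hg i (by simpa [Pi.single_eq_of_ne hne] using congrFun hij i)

theorem eq_or_apply_eq_of_mem_axisVectors {x m : ∀ i, K i} {j : ι}
    (hx : x ∈ insert 0 (axisVectors g ∪ -axisVectors g))
    (hm : m = Pi.single j (g j) ∨ m = -Pi.single j (g j)) : x = m ∨ x j = 0 ∨ x j = -m j := by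
  rw [mem_insert, mem_axisVectors_union_neg] at hx
  obtain rfl | ⟨i, hi⟩ := hx
  · simp
  · obtain rfl | hne := eq_or_ne i j
    · rcases hi with rfl | rfl <;> rcases hm with rfl | rfl <;> simp
    · rcases hi with rfl | rfl <;> simp [Pi.single_eq_of_ne hne.symm]

theorem isAPStar_axisVectors (h3 : ∀ i, 3 • g i ≠ 0) (h4 : ∀ i, 4 • g i ≠ 0) :
    IsAPStar (axisVectors g) where
  neg_notMem a ha hna := by
    obtain ⟨i, -, rfl⟩ := mem_image.1 ha
    obtain ⟨j, -, hj⟩ := mem_image.1 hna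
    have hi := congrFun hj i
    refine h4 i ?_
    obtain rfl | hne := eq_or_ne i j
    · simp only [Pi.single_eq_same, Pi.neg_apply] at hi
      linear_combination (norm := module) (2 : ℤ) • hi
    · simp only [Pi.single_eq_same, Pi.single_eq_of_ne hne, Pi.neg_apply] at hi
      linear_combination (norm := module) (4 : ℤ) • hi
  eq_zero_of_mem m hm r hsub hadd := by
    obtain ⟨j, hj⟩ := mem_axisVectors_union_neg.1 hm
    have hsmul_ne (k : ℕ) (hk : k • g j ≠ 0) : k • m j ≠ 0 := by
      rcases hj with rfl | rfl <;> simpa using hk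
    obtain hr | hsub_j := eq_or_apply_eq_of_mem_axisVectors hsub hj
    · exact sub_eq_self.1 hr
    obtain hr | hadd_j := eq_or_apply_eq_of_mem_axisVectors hadd hj
    · exact add_eq_left.1 hr
    rw [Pi.sub_apply] at hsub_j
    rw [Pi.add_apply] at hadd_j
    exfalso
    rcases hsub_j with hsub_j | hsub_j <;> rcases hadd_j with hadd_j | hadd_j
    · refine hsmul_ne 4 (h4 j) ?_
      linear_combination (norm := module) (2 : ℤ) • hsub_j + (2 : ℤ) • hadd_j
    · refine hsmul_ne 3 (h3 j) ?_
      linear_combination (norm := module) hsub_j + hadd_j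
    · refine hsmul_ne 3 (h3 j) ?_
      linear_combination (norm := module) hsub_j + hadd_j
    · refine hsmul_ne 4 (h4 j) ?_
      linear_combination (norm := module) hsub_j + hadd_j

end AxisVectors

theorem exists_zmod_addEquiv_pi {ι : Type*} [Finite ι] {p : ι → ℕ} (hp0 : ∀ i, p i ≠ 0)
    (hp : Pairwise (Function.onFun Nat.Coprime p)) :
    ∃ d : ℕ, Nonempty (ZMod (d + 1) ≃+ ∀ i, ZMod (p i)) := by
  have := Fintype.ofFinite ι
  obtain ⟨d, hd⟩ := Nat.exists_eq_succ_of_ne_zero (prod_ne_zero_iff.2 fun i (_ : i ∈ univ) ↦ hp0 i)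
  exact ⟨d, ⟨((ZMod.ringEquivCongr hd.symm).trans (ZMod.prodEquivPi p hp)).toAddEquiv⟩⟩

theorem zmod_natCast_ne_zero {p k : ℕ} (hk : k ≠ 0) (hkp : k < p) : (k : ZMod p) ≠ 0 := by
  rw [Ne, ZMod.natCast_eq_zero_iff]
  exact Nat.not_dvd_of_pos_of_lt hk.bot_lt hkp

theorem exists_isAPStar_zmod (N : ℕ) :
    ∃ (d : ℕ) (P : Finset (ZMod (d + 1))), IsAPStar P ∧ #P = N := by
  -- `Nat.fermatNumber 0 = 3` is too small: in `ZMod 3` the points `0, 1, -1` form a progression.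
  let p : Fin N → ℕ := fun i ↦ Nat.fermatNumber (i + 1)
  have hp5 (i) : 5 ≤ p i := Nat.fermatNumber_mono (Nat.le_add_left 1 i)
  obtain ⟨d, ⟨e⟩⟩ := exists_zmod_addEquiv_pi (fun i ↦ ne_zero_of_lt (hp5 i)) fun i j hij ↦
    Nat.pairwise_coprime_fermatNumber (by simpa [Fin.val_inj] using hij)
  have hne (k : ℕ) (hk : k ≠ 0) (hk5 : k < 5) (i) : k • (1 : ∀ i, ZMod (p i)) i ≠ 0 := by
    simpa using zmod_natCast_ne_zero hk (hk5.trans_le (hp5 i))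
  have hstar : IsAPStar (axisVectors (1 : ∀ i, ZMod (p i))) :=
    isAPStar_axisVectors (hne 3 (by decide) (by decide)) (hne 4 (by decide) (by decide))
  refine ⟨d, _, hstar.map e.symm, ?_⟩
  rw [card_map, card_axisVectors fun i ↦ by simpa using hne 1 (by decide) (by decide) i,
    Fintype.card_fin]

/-- There exists a positive semi-definite Hermitian complex matrix, indexed by `ℤ/dℤ`,
for which the restricted third moment
`∑_{n,r} A(n,n+r) A(n+r,n+2r) A(n+2r,n)` is a negative real number. -/
theorem statement4 :
    ∃ (d : ℕ) (A : Matrix (ZMod (d + 1)) (ZMod (d + 1)) ℂ),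
      A.IsHermitian ∧ A.PosSemidef ∧
      (let S : ℂ := ∑ n : ZMod (d + 1), ∑ r : ZMod (d + 1),
        A n (n + r) * A (n + r) (n + 2 * r) * A (n + 2 * r) n
       S.im = 0 ∧ S.re < 0) := by
  obtain ⟨d, P, hP, hcard⟩ := exists_isAPStar_zmod 2000
  have hpos := starMatrix_posSemidef ℂ P
  have hmoment : apMoment (starMatrix ℂ P) = (-5856 : ℝ) := by
    rw [apMoment_starMatrix ℂ hP, hcard]
    norm_num
  simp only [apMoment, nsmul_eq_mul, Nat.cast_ofNat] at hmoment
  refine ⟨d, starMatrix ℂ P, hpos.isHermitian, hpos, ?_⟩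
  rw [hmoment]
  norm_num
end
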